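/- For every L > 0, every m > 0 and every η ∈ (0,2), there exists a constant C₀ > 0 such that for every u ∈ C_c^∞((0,L)): ∫₀^L u'(x)² dx − (1/4) ∫₀^L u(x)²/x² dx ≥ m ∫₀^L u(x)²/x^η dx − C₀ ∫₀^L u(x)² dx. -/

import Mathlib

open MeasureTheory Real Set

/-!
For any `g` the square `(u' - g u)²` is nonnegative, and `2 g u u' = (g u²)' - g' u²`; integrating
gives the Riccati inequality `∫ (-g' - g²) u² ≤ ∫ u'²`. The choice `g = 1 / (2x)` is Hardy's
inequality. Perturbing it to `g = 1 / (2x) - A x^(1-η)` adds the gain `A (2 - η) x^(-η)` at the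
cost of the error `A² x^(2-2η)`, which is of lower order at `0` exactly when `η < 2`.
-/

theorem integrable_of_continuousOn_of_eq_zero {X E : Type*} [TopologicalSpace X]
    [MeasurableSpace X] [OpensMeasurableSpace X] [T2Space X] [NormedAddCommGroup E]
    {μ : Measure X} [IsFiniteMeasureOnCompacts μ] {K : Set X} (hK : IsCompact K) {f : X → E}
    (hf : ContinuousOn f K) (hzero : ∀ x ∉ K, f x = 0) : Integrable f μ :=
  (integrableOn_iff_integrable_of_support_subset (Function.support_subset_iff'.mpr hzero)).mp
    (hf.integrableOn_compact hK)

section Riccati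

variable {g g' u : ℝ → ℝ}

theorem integrable_mul_sq_of_continuousOn_tsupport (hg : ContinuousOn g (tsupport u))
    (hu : Continuous u) (hsupp : HasCompactSupport u) : Integrable fun x => g x * u x ^ 2 :=
  integrable_of_continuousOn_of_eq_zero hsupp (hg.mul (hu.pow 2).continuousOn) fun x hx => by
    simp [image_eq_zero_of_notMem_tsupport hx]

theorem integral_mul_sq_mono_of_le_on_tsupport {v w : ℝ → ℝ} (hv : ContinuousOn v (tsupport u))
    (hw : ContinuousOn w (tsupport u)) (hu : Continuous u) (hsupp : HasCompactSupport u)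
    (hle : ∀ x ∈ tsupport u, v x ≤ w x) : ∫ x, v x * u x ^ 2 ≤ ∫ x, w x * u x ^ 2 := by
  refine integral_mono (integrable_mul_sq_of_continuousOn_tsupport hv hu hsupp)
    (integrable_mul_sq_of_continuousOn_tsupport hw hu hsupp) fun x => ?_
  by_cases hx : x ∈ tsupport u
  · exact mul_le_mul_of_nonneg_right (hle x hx) (sq_nonneg (u x))
  · simp [image_eq_zero_of_notMem_tsupport hx]

theorem hasDerivAt_mul_sq_of_tsupport (hg : ∀ x ∈ tsupport u, HasDerivAt g (g' x) x)
    (hu : Differentiable ℝ u) (x : ℝ) :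
    HasDerivAt (fun x => g x * u x ^ 2) (g' x * u x ^ 2 + 2 * g x * (u x * deriv u x)) x := by
  by_cases hx : x ∈ tsupport u
  · exact ((hg x hx).fun_mul ((hu x).hasDerivAt.fun_pow 2)).congr_deriv (by push_cast; ring)
  · have hux : u =ᶠ[nhds x] 0 := notMem_tsupport_iff_eventuallyEq.mp hx
    have hzero : (fun x => g x * u x ^ 2) =ᶠ[nhds x] fun _ => 0 :=
      hux.mono fun y hy => by simp [hy]
    simpa [hux.eq_of_nhds] using (hasDerivAt_const x (0 : ℝ)).congr_of_eventuallyEq hzero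

theorem integral_neg_deriv_sub_sq_mul_sq_le
    (hg : ∀ x ∈ tsupport u, HasDerivAt g (g' x) x) (hg' : ContinuousOn g' (tsupport u))
    (hu : ContDiff ℝ 1 u) (hsupp : HasCompactSupport u) :
    ∫ x, (-g' x - g x ^ 2) * u x ^ 2 ≤ ∫ x, deriv u x ^ 2 := by
  have hderiv := hasDerivAt_mul_sq_of_tsupport hg (hu.differentiable one_ne_zero)
  have hgc : ContinuousOn g (tsupport u) := fun x hx => (hg x hx).continuousAt.continuousWithinAt
  have hu' : Continuous (deriv u) := hu.continuous_deriv le_rfl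
  have hderiv_sq : Integrable fun x => deriv u x ^ 2 :=
    (hu'.pow 2).integrable_of_hasCompactSupport (hsupp.deriv.comp_left (zero_pow two_ne_zero))
  have hweight : Integrable fun x => (-g' x - g x ^ 2) * u x ^ 2 :=
    integrable_mul_sq_of_continuousOn_tsupport (hg'.neg.sub (hgc.pow 2)) hu.continuous hsupp
  have hcross : Integrable fun x => 2 * g x * (u x * deriv u x) :=
    integrable_of_continuousOn_of_eq_zero hsupp
      ((hgc.const_mul 2).mul (hu.continuous.mul hu').continuousOn) fun x hx => by
        simp [image_eq_zero_of_notMem_tsupport hx]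
  have hmul_sq : Integrable fun x => g x * u x ^ 2 :=
    integrable_mul_sq_of_continuousOn_tsupport hgc hu.continuous hsupp
  have htotal : Integrable fun x => g' x * u x ^ 2 + 2 * g x * (u x * deriv u x) :=
    (integrable_mul_sq_of_continuousOn_tsupport hg' hu.continuous hsupp).add hcross
  calc ∫ x, (-g' x - g x ^ 2) * u x ^ 2
      = ∫ x, (-g' x - g x ^ 2) * u x ^ 2
          + (g' x * u x ^ 2 + 2 * g x * (u x * deriv u x)) := by
        rw [integral_add hweight htotal,
          integral_eq_zero_of_hasDerivAt_of_integrable hderiv htotal hmul_sq, add_zero]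
    _ ≤ ∫ x, deriv u x ^ 2 :=
        integral_mono (hweight.add htotal) hderiv_sq fun x => by
          linarith [sq_nonneg (deriv u x - g x * u x)]

end Riccati

/-- The function `g` to which the Riccati inequality is applied: the logarithmic derivative
`1 / (2x)` of `√x`, the ground state of Hardy's inequality, lowered by `A x^(1-η)`. -/
noncomputable def hardyLogDeriv (A η x : ℝ) : ℝ :=
  (2 * x)⁻¹ - A * x ^ (1 - η)

theorem hasDerivAt_hardyLogDeriv (A η : ℝ) {x : ℝ} (hx : 0 < x) :
    HasDerivAt (hardyLogDeriv A η) (-(2 * x ^ 2)⁻¹ - A * (1 - η) * x ^ (-η)) x := by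
  have hinv : HasDerivAt (fun y : ℝ => (2 * y)⁻¹) (-(2 * x ^ 2)⁻¹) x := by
    refine (((hasDerivAt_id' x).const_mul 2).fun_inv (by positivity)).congr_deriv ?_
    field_simp
  have hpow : HasDerivAt (fun y : ℝ => y ^ (1 - η)) ((1 - η) * x ^ (-η)) x := by
    simpa using hasDerivAt_rpow_const (p := 1 - η) (Or.inl hx.ne')
  exact (hinv.fun_sub (hpow.const_mul A)).congr_deriv (by ring)

theorem neg_deriv_hardyLogDeriv_sub_sq (A η : ℝ) {x : ℝ} (hx : 0 < x) :
    -deriv (hardyLogDeriv A η) x - hardyLogDeriv A η x ^ 2 =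
      1 / 4 / x ^ 2 + (A * (2 - η) * x ^ (-η) - A ^ 2 * x ^ (2 - 2 * η)) := by
  have hcross : x⁻¹ * x ^ (1 - η) = x ^ (-η) := by
    rw [← rpow_neg_one, ← rpow_add hx]
    ring_nf
  have hsq : (x ^ (1 - η)) ^ 2 = x ^ (2 - 2 * η) := by
    rw [← rpow_mul_natCast hx.le]
    ring_nf
  rw [(hasDerivAt_hardyLogDeriv A η hx).deriv, hardyLogDeriv, ← hsq, ← hcross]
  ring

theorem hardy_inequality_with_remainder (A η : ℝ) {u : ℝ → ℝ} (hu : ContDiff ℝ 1 u)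
    (hcomp : HasCompactSupport u) (hsupp : tsupport u ⊆ Ioi 0) :
    ∫ x, (1 / 4 / x ^ 2 + (A * (2 - η) * x ^ (-η) - A ^ 2 * x ^ (2 - 2 * η))) * u x ^ 2 ≤
      ∫ x, deriv u x ^ 2 := by
  have hderiv (x : ℝ) (hx : x ∈ tsupport u) := hasDerivAt_hardyLogDeriv A η (hsupp hx)
  have hne (x : ℝ) (hx : x ∈ tsupport u) : x ≠ 0 := (hsupp hx).ne'
  have hcont : ContinuousOn (deriv (hardyLogDeriv A η)) (tsupport u) :=
    ContinuousOn.congr (by fun_prop (disch := simp +contextual [hne]))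
      fun x hx => (hderiv x hx).deriv
  convert integral_neg_deriv_sub_sq_mul_sq_le
    (fun x hx => (hderiv x hx).differentiableAt.hasDerivAt) hcont hu hcomp using 3 with x
  by_cases hx : x ∈ tsupport u
  · rw [neg_deriv_hardyLogDeriv_sub_sq A η (hsupp hx)]
  · simp [image_eq_zero_of_notMem_tsupport hx]

theorem exists_pos_forall_mul_rpow_le_mul_rpow_add {p q k : ℝ} (hpq : p < q) (hk : 0 < k)
    (c L : ℝ) : ∃ C > 0, ∀ x ∈ Ioc 0 L, c * x ^ q ≤ k * x ^ p + C := by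
  have hlim : Filter.Tendsto (fun x : ℝ => c * x ^ (q - p)) (nhdsWithin 0 (Ioi 0)) (nhds 0) := by
    have hcont : ContinuousAt (fun x : ℝ => c * x ^ (q - p)) 0 :=
      (continuousAt_rpow_const 0 (q - p) (Or.inr (sub_pos.mpr hpq).le)).const_mul c
    simpa [zero_rpow (sub_pos.mpr hpq).ne'] using hcont.tendsto.mono_left nhdsWithin_le_nhds
  obtain ⟨δ, hδ, hsmall⟩ :=
    mem_nhdsGT_iff_exists_Ioo_subset.mp (hlim.eventually_lt_const hk)
  have hcont : ContinuousOn (fun x : ℝ => c * x ^ q - k * x ^ p) (Icc δ L) := fun x hx =>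
    have hx0 : x ≠ 0 := (lt_of_lt_of_le hδ hx.1).ne'
    (((continuousAt_rpow_const x q (Or.inl hx0)).const_mul c).sub
      ((continuousAt_rpow_const x p (Or.inl hx0)).const_mul k)).continuousWithinAt
  obtain ⟨B, hB⟩ := isCompact_Icc.bddAbove_image hcont
  refine ⟨max B 1, by positivity, fun x hx => ?_⟩
  rcases lt_or_ge x δ with hxδ | hδx
  · calc c * x ^ q = c * x ^ (q - p) * x ^ p := by
          rw [mul_assoc, ← rpow_add hx.1, sub_add_cancel]
      _ ≤ k * x ^ p := by gcongr; exacts [rpow_nonneg hx.1.le p, (hsmall ⟨hx.1, hxδ⟩).le]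
      _ ≤ k * x ^ p + max B 1 := by simp
  · have hxB : c * x ^ q - k * x ^ p ≤ B := hB ⟨x, ⟨hδx, hx.2⟩, rfl⟩
    linarith [le_max_left B 1]

theorem exists_div_rpow_sub_le {η : ℝ} (hη : η < 2) (m L : ℝ) :
    ∃ A : ℝ, ∃ C > 0, ∀ x ∈ Ioc 0 L,
      m / x ^ η - C ≤ A * (2 - η) * x ^ (-η) - A ^ 2 * x ^ (2 - 2 * η) := by
  obtain ⟨C, hC, hbound⟩ := exists_pos_forall_mul_rpow_le_mul_rpow_add
    (show -η < 2 - 2 * η by linarith) one_pos (((m + 1) / (2 - η)) ^ 2) L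
  -- `A (2 - η) = m + 1`, and the spare `x ^ (-η)` absorbs the error `A² x ^ (2 - 2η)`.
  refine ⟨(m + 1) / (2 - η), C, hC, fun x hx => ?_⟩
  rw [div_mul_cancel₀ _ (sub_pos.mpr hη).ne', div_eq_mul_inv, ← rpow_neg hx.1.le]
  linarith [hbound x hx]

theorem exists_integral_hardy_poincare_weight_mul_sq_le (L m : ℝ) {η : ℝ} (hη : η < 2) :
    ∃ C > 0, ∀ u : ℝ → ℝ, ContDiff ℝ 1 u → tsupport u ⊆ Ioc 0 L →
      ∫ x, (1 / 4 / x ^ 2 + (m / x ^ η - C)) * u x ^ 2 ≤ ∫ x, deriv u x ^ 2 := by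
  obtain ⟨A, C, hC, hbound⟩ := exists_div_rpow_sub_le hη m L
  refine ⟨C, hC, fun u hu hsupp => ?_⟩
  have hcomp : HasCompactSupport u :=
    Metric.isCompact_of_isClosed_isBounded (isClosed_tsupport u)
      ((Metric.isBounded_Ioc 0 L).subset hsupp)
  have hne (x : ℝ) (hx : x ∈ tsupport u) : x ≠ 0 := (hsupp hx).1.ne'
  have hrpow_ne (x : ℝ) (hx : x ∈ tsupport u) : x ^ η ≠ 0 := (rpow_pos_of_pos (hsupp hx).1 η).ne'
  refine (integral_mul_sq_mono_of_le_on_tsupport ?_ ?_ hu.continuous hcomp fun x hx =>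
    add_le_add_right (hbound x (hsupp hx)) _).trans
      (hardy_inequality_with_remainder A η hu hcomp fun x hx => (hsupp hx).1)
  all_goals fun_prop (disch := simp +contextual [hne])

theorem integrable_sq_div_rpow {u : ℝ → ℝ} (hu : Continuous u) (hcomp : HasCompactSupport u)
    (hsupp : tsupport u ⊆ Ioi 0) (p : ℝ) : Integrable fun x => u x ^ 2 / x ^ p :=
  integrable_of_continuousOn_of_eq_zero hcomp
    ((hu.pow 2).continuousOn.div
      (continuousOn_id.rpow_const fun _ hx => Or.inl (hsupp hx).ne')
      fun _ hx => (rpow_pos_of_pos (hsupp hx) p).ne')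
    fun _ hx => by simp [image_eq_zero_of_notMem_tsupport hx]

theorem integral_hardy_poincare_weight_mul_sq (m C η : ℝ) {u : ℝ → ℝ}
    (hu : Continuous u) (hcomp : HasCompactSupport u) (hsupp : tsupport u ⊆ Ioi 0) :
    ∫ x, (1 / 4 / x ^ 2 + (m / x ^ η - C)) * u x ^ 2 =
      1 / 4 * (∫ x, u x ^ 2 / x ^ 2) + (m * (∫ x, u x ^ 2 / x ^ η) - C * ∫ x, u x ^ 2) := by
  have hrpow (p : ℝ) := integrable_sq_div_rpow hu hcomp hsupp p
  have hhardy : Integrable fun x => 1 / 4 * (u x ^ 2 / x ^ 2) := by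
    simpa using (hrpow 2).const_mul (1 / 4)
  have hsubcritical : Integrable fun x => m * (u x ^ 2 / x ^ η) := (hrpow η).const_mul m
  have hsq : Integrable fun x => C * u x ^ 2 := by simpa using (hrpow 0).const_mul C
  have hdiff : Integrable fun x => m * (u x ^ 2 / x ^ η) - C * u x ^ 2 := hsubcritical.sub hsq
  simp only [← integral_const_mul]
  rw [← integral_sub hsubcritical hsq, ← integral_add hhardy hdiff]
  congr with x
  ring

theorem hardy_poincare_inequality_general (L m : ℝ) {η : ℝ} (hη : η < 2) :
    ∃ C₀ > (0 : ℝ), ∀ u : ℝ → ℝ, ContDiff ℝ 1 u → tsupport u ⊆ Ioc 0 L →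
      m * (∫ x in (0 : ℝ)..L, (u x) ^ 2 / x ^ η) - C₀ * (∫ x in (0 : ℝ)..L, (u x) ^ 2)
        ≤ (∫ x in (0 : ℝ)..L, (deriv u x) ^ 2)
          - (1 / 4) * ∫ x in (0 : ℝ)..L, (u x) ^ 2 / x ^ 2 := by
  obtain ⟨C, hC, hineq⟩ := exists_integral_hardy_poincare_weight_mul_sq_le L m hη
  refine ⟨C, hC, fun u hu hsupp => ?_⟩
  have hcomp : HasCompactSupport u :=
    Metric.isCompact_of_isClosed_isBounded (isClosed_tsupport u)
      ((Metric.isBounded_Ioc 0 L).subset hsupp)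
  have hwhole {f : ℝ → ℝ} (hf : ∀ x ∉ tsupport u, f x = 0) : ∫ x in (0 : ℝ)..L, f x = ∫ x, f x :=
    intervalIntegral.integral_eq_integral_of_support_subset <|
      (Function.support_subset_iff'.mpr hf).trans hsupp
  have hu0 (x : ℝ) (hx : x ∉ tsupport u) : u x = 0 := image_eq_zero_of_notMem_tsupport hx
  have hu'0 (x : ℝ) (hx : x ∉ tsupport u) : deriv u x = 0 :=
    Function.notMem_support.mp fun h => hx (support_deriv_subset h)
  rw [hwhole fun x hx => by simp [hu0 x hx], hwhole fun x hx => by simp [hu0 x hx],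
    hwhole fun x hx => by simp [hu'0 x hx], hwhole fun x hx => by simp [hu0 x hx]]
  have hineq_u := hineq u hu hsupp
  rw [integral_hardy_poincare_weight_mul_sq m C η hu.continuous hcomp fun x hx => (hsupp hx).1]
    at hineq_u
  linarith

/-- One-dimensional Hardy–Poincaré (improved Hardy) inequality: for every `L > 0`, `m > 0`
and `η ∈ (0,2)`, there is `C₀ > 0` such that for every `u ∈ C_c^∞((0,L))`,
`∫₀^L u'² − (1/4)∫₀^L u²/x² ≥ m ∫₀^L u²/x^η − C₀ ∫₀^L u²`. -/
theorem hardy_poincare_inequality (L m η : ℝ) (hL : 0 < L) (hm : 0 < m)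
    (hη : η ∈ Set.Ioo (0 : ℝ) 2) :
    ∃ C₀ > (0 : ℝ), ∀ u : ℝ → ℝ,
      ContDiff ℝ (⊤ : ℕ∞) u → HasCompactSupport u → tsupport u ⊆ Set.Ioo 0 L →
      m * (∫ x in (0 : ℝ)..L, (u x) ^ 2 / x ^ η) - C₀ * (∫ x in (0 : ℝ)..L, (u x) ^ 2)
        ≤ (∫ x in (0 : ℝ)..L, (deriv u x) ^ 2)
          - (1 / 4) * ∫ x in (0 : ℝ)..L, (u x) ^ 2 / x ^ 2 := by
  obtain ⟨C₀, hC₀, hineq⟩ := hardy_poincare_inequality_general L m hη.2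
  exact ⟨C₀, hC₀, fun u hu _ hsupp =>
    hineq u (hu.of_le (by simp)) (hsupp.trans Ioo_subset_Ioc_self)⟩
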